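/- (Theorem 4.4, upper bound of return for an unknown knowledge gap.) Let M1 = (T1,R1), M2 = (T2,R2) and M* = (T*,R*) be three finite discounted MDPs on (S, A, γ) whose rewards are all nonnegative, where M* is an intermediate MDP between M1 and M2 in the sense that, for a fixed state s0 ∈ S and every action a ∈ A, Δ_{s0,a}(M*, M1) ≤ max_{a'∈A} Δ_{s0,a'}(M1, M2) and Δ_{s0,a}(M*, M2) ≤ max_{a'∈A} Δ_{s0,a'}(M1, M2) (as holds when M* corresponds to a convex combination of the descriptors of M1 and M2). Then the optimal return of M* from initial state s0 obeys V*_{M*}(s0) ≤ min(V*_{M1}(s0), V*_{M2}(s0)) + max_{a∈A} Δ_{s0,a}(M1, M2). -/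

import Mathlib

open Finset

variable {S A : Type*}

/-- Max over the (finite, nonempty) action space. -/
noncomputable def qmax [Fintype A] [Nonempty A] (f : A → ℝ) : ℝ :=
  Finset.univ.sup' Finset.univ_nonempty f

/-- Bellman operator `Γ_M` of the MDP `M = (T, R)` with discount `γ`. -/
noncomputable def bellman [Fintype S] [Fintype A] [Nonempty A]
    (γ : ℝ) (T : S → A → S → ℝ) (R : S → A → ℝ)
    (f : S → A → ℝ) : S → A → ℝ :=
  fun s a => R s a + γ * ∑ s' : S, T s a s' * qmax (f s')

/-- `D_{s,a}(M‖M̄)`, where `Vbar` is the optimal value function of `M̄`. -/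
noncomputable def Dop [Fintype S]
    (γ : ℝ) (T : S → A → S → ℝ) (R : S → A → ℝ)
    (T' : S → A → S → ℝ) (R' : S → A → ℝ) (Vbar : S → ℝ) : S → A → ℝ :=
  fun s a => |R s a - R' s a| + γ * ∑ s' : S, Vbar s' * |T s a s' - T' s a s'|

/-- The operator `L_{M‖M̄}`, where `Vbar` is the optimal value function of `M̄`. -/
noncomputable def Lop [Fintype S] [Fintype A] [Nonempty A]
    (γ : ℝ) (T : S → A → S → ℝ) (R : S → A → ℝ)
    (T' : S → A → S → ℝ) (R' : S → A → ℝ) (Vbar : S → ℝ)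
    (f : S → A → ℝ) : S → A → ℝ :=
  fun s a => Dop γ T R T' R' Vbar s a + γ * ∑ s' : S, T s a s' * qmax (f s')

theorem qmax_ge [Fintype A] [Nonempty A] (f : A → ℝ) (a : A) : f a ≤ qmax f :=
  Finset.le_sup' f (Finset.mem_univ a)

theorem qmax_le [Fintype A] [Nonempty A] (f : A → ℝ) (c : ℝ) (h : ∀ a, f a ≤ c) : qmax f ≤ c :=
  Finset.sup'_le _ _ (fun a _ => h a)

theorem cmp_aux [Fintype S] [Nonempty S] [Fintype A] [Nonempty A]
    (γ : ℝ) (hγ1 : γ < 1) (h : S → A → ℝ)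
    (H : ∀ m, (∀ s a, h s a ≤ m) → ∀ s a, h s a ≤ γ * m) : ∀ s a, h s a ≤ 0 := by
  obtain ⟨p, hp⟩ := Finite.exists_max (fun p : S × A => h p.1 p.2)
  have h1 : ∀ s a, h s a ≤ h p.1 p.2 := fun s a => hp (s, a)
  have h2 := H _ h1 p.1 p.2
  intro s a
  have := h1 s a
  nlinarith

theorem Q_nonneg [Fintype S] [Nonempty S] [Fintype A] [Nonempty A]
    (γ : ℝ) (hγ0 : 0 ≤ γ) (hγ1 : γ < 1) (T : S → A → S → ℝ) (R : S → A → ℝ)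
    (hT : ∀ s a s', 0 ≤ T s a s') (hTs : ∀ s a, ∑ s' : S, T s a s' = 1)
    (hR : ∀ s a, 0 ≤ R s a)
    (Q : S → A → ℝ) (hQ : ∀ s a, Q s a = bellman γ T R Q s a) (s : S) : 0 ≤ qmax (Q s) := by
  have key : ∀ s a, - Q s a ≤ 0 := by
    apply cmp_aux γ hγ1
    intro m hm s a
    have h1 : ∑ s' : S, T s a s' * (-m) ≤ ∑ s' : S, T s a s' * qmax (Q s') := by
      apply Finset.sum_le_sum
      intro s' _
      apply mul_le_mul_of_nonneg_left _ (hT s a s')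
      have a0 : A := Classical.arbitrary A
      linarith [qmax_ge (Q s') a0, hm s' a0]
    rw [← Finset.sum_mul, hTs, one_mul] at h1
    have h2 := mul_le_mul_of_nonneg_left h1 hγ0
    have h3 := hQ s a
    unfold bellman at h3
    linarith [hR s a]
  have a0 : A := Classical.arbitrary A
  linarith [qmax_ge (Q s) a0, key s a0]

theorem Q_diff [Fintype S] [Nonempty S] [Fintype A] [Nonempty A]
    (γ : ℝ) (hγ0 : 0 ≤ γ) (hγ1 : γ < 1) (T : S → A → S → ℝ) (R : S → A → ℝ)
    (T' : S → A → S → ℝ) (R' : S → A → ℝ)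
    (hT : ∀ s a s', 0 ≤ T s a s') (hTs : ∀ s a, ∑ s' : S, T s a s' = 1)
    (hT' : ∀ s a s', 0 ≤ T' s a s') (hTs' : ∀ s a, ∑ s' : S, T' s a s' = 1)
    (hR' : ∀ s a, 0 ≤ R' s a)
    (Q : S → A → ℝ) (hQ : ∀ s a, Q s a = bellman γ T R Q s a)
    (Q' : S → A → ℝ) (hQ' : ∀ s a, Q' s a = bellman γ T' R' Q' s a)
    (d : S → A → ℝ)
    (hd : ∀ s a, d s a = Lop γ T R T' R' (fun s => qmax (Q' s)) d s a) (s : S) (a : A) :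
    |Q s a - Q' s a| ≤ d s a := by
  have hV := Q_nonneg γ hγ0 hγ1 T' R' hT' hTs' hR' Q' hQ'
  have key : ∀ s a, |Q s a - Q' s a| - d s a ≤ 0 := by
    apply cmp_aux γ hγ1
    intro m hm s a
    have hVd : ∀ s', |qmax (Q s') - qmax (Q' s')| ≤ qmax (d s') + m := by
      intro s'
      have e1 : qmax (Q s') ≤ qmax (Q' s') + (qmax (d s') + m) := by
        apply qmax_le
        intro b
        linarith [qmax_ge (Q' s') b, qmax_ge (d s') b, hm s' b, le_abs_self (Q s' b - Q' s' b)]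
      have e2 : qmax (Q' s') ≤ qmax (Q s') + (qmax (d s') + m) := by
        apply qmax_le
        intro b
        linarith [qmax_ge (Q s') b, qmax_ge (d s') b, hm s' b, neg_abs_le (Q s' b - Q' s' b)]
      rw [abs_le]
      constructor <;> linarith
    have h1 : |∑ s' : S, (T s a s' * qmax (Q s') - T' s a s' * qmax (Q' s'))| ≤
        ∑ s' : S, (qmax (Q' s') * |T s a s' - T' s a s'| + T s a s' * qmax (d s')
          + T s a s' * m) := by
      refine (Finset.abs_sum_le_sum_abs _ _).trans (Finset.sum_le_sum ?_)
      intro s' _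
      have e : T s a s' * qmax (Q s') - T' s a s' * qmax (Q' s') =
        qmax (Q' s') * (T s a s' - T' s a s') + T s a s' * (qmax (Q s') - qmax (Q' s')) := by ring
      rw [e]
      refine (abs_add_le _ _).trans ?_
      rw [abs_mul, abs_mul, abs_of_nonneg (hV s'), abs_of_nonneg (hT s a s')]
      have := mul_le_mul_of_nonneg_left (hVd s') (hT s a s')
      linarith
    rw [Finset.sum_add_distrib, Finset.sum_add_distrib, ← Finset.sum_mul, hTs, one_mul,
      Finset.sum_sub_distrib] at h1
    have h2 := mul_le_mul_of_nonneg_left h1 hγ0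
    have h3 : |Q s a - Q' s a| ≤ |R s a - R' s a| +
        γ * |∑ s' : S, T s a s' * qmax (Q s') - ∑ s' : S, T' s a s' * qmax (Q' s')| := by
      rw [← abs_of_nonneg hγ0, ← abs_mul]
      refine le_trans (le_of_eq ?_) (abs_add_le _ _)
      rw [hQ s a, hQ' s a]
      unfold bellman
      congr 1
      ring
    have h4 := hd s a
    unfold Lop Dop at h4
    simp only at h4
    linarith
  linarith [key s a]

/-- Theorem 4.4: upper bound of return for an unknown knowledge gap. -/
theorem return_upper_bound_for_unknown_gap
    [Fintype S] [Nonempty S] [Fintype A] [Nonempty A]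
    (γ : ℝ) (hγ0 : 0 ≤ γ) (hγ1 : γ < 1)
    (T1 : S → A → S → ℝ) (R1 : S → A → ℝ)
    (T2 : S → A → S → ℝ) (R2 : S → A → ℝ)
    (Tstar : S → A → S → ℝ) (Rstar : S → A → ℝ)
    (hT1 : ∀ s a s', 0 ≤ T1 s a s') (hT1sum : ∀ s a, ∑ s' : S, T1 s a s' = 1)
    (hT2 : ∀ s a s', 0 ≤ T2 s a s') (hT2sum : ∀ s a, ∑ s' : S, T2 s a s' = 1)
    (hTstar : ∀ s a s', 0 ≤ Tstar s a s')
    (hTstarsum : ∀ s a, ∑ s' : S, Tstar s a s' = 1)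
    (hR1 : ∀ s a, 0 ≤ R1 s a) (hR2 : ∀ s a, 0 ≤ R2 s a)
    (hRstar : ∀ s a, 0 ≤ Rstar s a)
    -- optimal Q-functions: the (unique) fixed points of the three Bellman operators,
    -- giving the optimal value functions `V*_{M1}`, `V*_{M2}`, `V*_{M*}` via `qmax`.
    (Q1 : S → A → ℝ) (hQ1 : ∀ s a, Q1 s a = bellman γ T1 R1 Q1 s a)
    (Q2 : S → A → ℝ) (hQ2 : ∀ s a, Q2 s a = bellman γ T2 R2 Q2 s a)
    (Qstar : S → A → ℝ) (hQstar : ∀ s a, Qstar s a = bellman γ Tstar Rstar Qstar s a)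
    -- dissimilarities needed for `Δ(M*, M1)`: `dA1 = d(M*‖M1)` and `dB1 = d(M1‖M*)`
    (dA1 : S → A → ℝ)
    (hdA1 : ∀ s a, dA1 s a = Lop γ Tstar Rstar T1 R1 (fun s => qmax (Q1 s)) dA1 s a)
    (dB1 : S → A → ℝ)
    (hdB1 : ∀ s a, dB1 s a = Lop γ T1 R1 Tstar Rstar (fun s => qmax (Qstar s)) dB1 s a)
    -- dissimilarities needed for `Δ(M*, M2)`: `dA2 = d(M*‖M2)` and `dB2 = d(M2‖M*)`
    (dA2 : S → A → ℝ)
    (hdA2 : ∀ s a, dA2 s a = Lop γ Tstar Rstar T2 R2 (fun s => qmax (Q2 s)) dA2 s a)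
    (dB2 : S → A → ℝ)
    (hdB2 : ∀ s a, dB2 s a = Lop γ T2 R2 Tstar Rstar (fun s => qmax (Qstar s)) dB2 s a)
    -- dissimilarities needed for `Δ(M1, M2)`: `d12 = d(M1‖M2)` and `d21 = d(M2‖M1)`
    (d12 : S → A → ℝ)
    (hd12 : ∀ s a, d12 s a = Lop γ T1 R1 T2 R2 (fun s => qmax (Q2 s)) d12 s a)
    (d21 : S → A → ℝ)
    (hd21 : ∀ s a, d21 s a = Lop γ T2 R2 T1 R1 (fun s => qmax (Q1 s)) d21 s a)
    -- `M*` is intermediate between `M1` and `M2` at state `s0`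
    (s0 : S)
    (hmid1 : ∀ a, min (dA1 s0 a) (dB1 s0 a) ≤
      qmax (fun a' => min (d12 s0 a') (d21 s0 a')))
    (hmid2 : ∀ a, min (dA2 s0 a) (dB2 s0 a) ≤
      qmax (fun a' => min (d12 s0 a') (d21 s0 a'))) :
    qmax (Qstar s0) ≤ min (qmax (Q1 s0)) (qmax (Q2 s0)) +
      qmax (fun a => min (d12 s0 a) (d21 s0 a)) := by
  have m1 : ∀ a, Qstar s0 a ≤ Q1 s0 a + min (dA1 s0 a) (dB1 s0 a) := by
    intro a
    have x := Q_diff γ hγ0 hγ1 Tstar Rstar T1 R1 hTstar hTstarsum hT1 hT1sum hR1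
      Qstar hQstar Q1 hQ1 dA1 hdA1 s0 a
    have y := Q_diff γ hγ0 hγ1 T1 R1 Tstar Rstar hT1 hT1sum hTstar hTstarsum hRstar
      Q1 hQ1 Qstar hQstar dB1 hdB1 s0 a
    rw [abs_le] at x y
    have := le_min x.2 (show Qstar s0 a - Q1 s0 a ≤ dB1 s0 a by linarith [y.1])
    linarith
  have m2 : ∀ a, Qstar s0 a ≤ Q2 s0 a + min (dA2 s0 a) (dB2 s0 a) := by
    intro a
    have x := Q_diff γ hγ0 hγ1 Tstar Rstar T2 R2 hTstar hTstarsum hT2 hT2sum hR2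
      Qstar hQstar Q2 hQ2 dA2 hdA2 s0 a
    have y := Q_diff γ hγ0 hγ1 T2 R2 Tstar Rstar hT2 hT2sum hTstar hTstarsum hRstar
      Q2 hQ2 Qstar hQstar dB2 hdB2 s0 a
    rw [abs_le] at x y
    have := le_min x.2 (show Qstar s0 a - Q2 s0 a ≤ dB2 s0 a by linarith [y.1])
    linarith
  apply qmax_le
  intro a
  rw [← sub_le_iff_le_add]
  apply le_min
  · linarith [m1 a, hmid1 a, qmax_ge (Q1 s0) a]
  · linarith [m2 a, hmid2 a, qmax_ge (Q2 s0) a]
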